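/- Let q = 2^m where m ≥ 3, and let Tr denote the absolute trace map from GF(2^m) to GF(2). Then the GF(2)-linear span of the set B = {u ∈ GF(q) : Tr(u³) = 1} is the whole field GF(q), viewed as a vector space over GF(2). -/

import Mathlib

/-!
Write `Q u = Tr (u³)`, let `S` be the span of `{u | Q u = 1}`, and suppose `S` is proper. Thus `Q`
vanishes off `S`. There are two cases.

* Cubing is injective. It then maps the complement of `S` into the nonzero elements of `ker Tr`, so
  `|F| - |S| < |ker Tr|`. But `S` and `ker Tr` are both proper subspaces, hence have at most
  `|F| / 2` elements each, a contradiction.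
* Cubing is not injective. Then `F` contains `ω` with `ω² + ω + 1 = 0`, and since `Q (ω u) = Q u`
  the subspace `S` is stable under multiplication by `ω`. Let `B u v = Tr (u² v + u v²)` be the
  polar form of `Q`. For `h ∈ S` and `w ∉ S`, both `w` and `w + h` lie off `S`, so `Q h = B w h`.
  Applying this to `w`, `ω w` and their sum `w + ω w = ω² w`, none of which lies in `S`, gives
  `Q h = Q h + Q h = 0`. So `Q` vanishes identically, whence so does `B`; nondegeneracy of the trace
  form turns this into `v⁴ = v` for all `v`, which is impossible in a field with more than four
  elements.
-/

/-- The absolute trace is invariant under Frobenius. -/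
lemma trace_sq_eq {F : Type*} [Field F] [Fintype F] [Algebra (ZMod 2) F] (x : F) :
    Algebra.trace (ZMod 2) F (x ^ 2) = Algebra.trace (ZMod 2) F x := by
  have h := Algebra.trace_eq_of_algEquiv
    (FiniteField.frobeniusAlgEquivOfAlgebraic (ZMod 2) F) x
  simpa using h

lemma two_mul_card_le_of_ne_top {F : Type*} [Field F] [Fintype F] [Algebra (ZMod 2) F]
    (S : Submodule (ZMod 2) F) (hS : S ≠ ⊤) : 2 * Nat.card S ≤ Nat.card F := by
  have h1 : S.toAddSubgroup.index ≠ 1 := by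
    rw [Ne, AddSubgroup.index_eq_one]
    intro h
    apply hS
    ext x
    have : x ∈ S.toAddSubgroup := by rw [h]; trivial
    simpa using this
  have h0 : S.toAddSubgroup.index ≠ 0 := AddSubgroup.index_ne_zero_of_finite
  have h2 := S.toAddSubgroup.card_mul_index
  have h3 : Nat.card S.toAddSubgroup = Nat.card S := rfl
  rw [h3] at h2
  have : 2 ≤ S.toAddSubgroup.index := by omega
  nlinarith

/-- The polar form `Tr (u² v + u v²)` of `u ↦ Tr (u³)` is not identically zero once `|F| > 4`;
hence neither is `Tr (u³)`. -/
lemma exists_trace_cube_ne_zero {F : Type*} [Field F] [Fintype F] [Algebra (ZMod 2) F]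
    (hF : 4 < Fintype.card F) : ∃ u : F, Algebra.trace (ZMod 2) F (u ^ 3) ≠ 0 := by
  by_contra! hQ
  have : CharP F 2 := charP_of_injective_algebraMap (algebraMap (ZMod 2) F).injective 2
  have hB (u v : F) : Algebra.trace (ZMod 2) F (u ^ 2 * (v + v ^ 4)) = 0 := by
    have h := hQ (u + v)
    have e : (u + v) ^ 3 = u ^ 3 + v ^ 3 + u ^ 2 * v + u * v ^ 2 := by
      linear_combination (u ^ 2 * v + u * v ^ 2) * CharTwo.two_eq_zero (R := F)
    rw [e, map_add, map_add, map_add, hQ, hQ, ← trace_sq_eq (u * v ^ 2)] at h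
    rw [mul_add, map_add, ← h]
    ring_nf
  have hv (v : F) : v + v ^ 4 = 0 := by
    refine (traceForm_nondegenerate (ZMod 2) F).1 _ fun y => ?_
    obtain ⟨u, rfl⟩ := (FiniteField.frobeniusAlgEquivOfAlgebraic (ZMod 2) F).surjective y
    rw [Algebra.traceForm_apply, mul_comm]
    simpa using hB u v
  obtain ⟨g, hg⟩ := IsCyclic.exists_generator (α := Fˣ)
  have hg3 : g ^ 3 = 1 := by
    ext
    have h1 : (g : F) * ((g : F) ^ 3 - 1) = 0 := by
      linear_combination hv (g : F) - (g : F) * CharTwo.two_eq_zero (R := F)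
    have h2 := (mul_eq_zero.1 h1).resolve_left g.ne_zero
    push_cast
    linear_combination h2
  have ho : orderOf g = Fintype.card F - 1 := by
    rw [orderOf_eq_card_of_forall_mem_zpowers hg, Nat.card_units, Nat.card_eq_fintype_card]
  have := Nat.le_of_dvd (by norm_num) (orderOf_dvd_of_pow_eq_one hg3)
  omega

/-- For `q = 2^m`, `m ≥ 3`, the `GF(2)`-linear span of
`B = {u ∈ GF(q) : Tr(u³) = 1}` is the whole field `GF(q)`, where `Tr` is the
absolute trace map `GF(2^m) → GF(2)`. -/
theorem span_trace_cube_eq_one (F : Type*) [Field F] [Fintype F] [Algebra (ZMod 2) F]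
    (m : ℕ) (hm : 3 ≤ m) (hcard : Fintype.card F = 2 ^ m) :
    Submodule.span (ZMod 2) {u : F | Algebra.trace (ZMod 2) F (u ^ 3) = 1} = ⊤ := by
  have hF : 4 < Fintype.card F := by
    have : 2 ^ 3 ≤ 2 ^ m := Nat.pow_le_pow_right (by norm_num) hm
    omega
  have : CharP F 2 := charP_of_injective_algebraMap (algebraMap (ZMod 2) F).injective 2
  have zmod_ne_one : ∀ a : ZMod 2, a ≠ 1 → a = 0 := by decide
  by_contra hS
  set S := Submodule.span (ZMod 2) {u : F | Algebra.trace (ZMod 2) F (u ^ 3) = 1} with hSdef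
  have hoff (w : F) (hw : w ∉ S) : Algebra.trace (ZMod 2) F (w ^ 3) = 0 :=
    zmod_ne_one _ fun h => hw (Submodule.subset_span h)
  by_cases hinj : Function.Injective fun x : F => x ^ 3
  · set K := LinearMap.ker (Algebra.trace (ZMod 2) F) with hK
    have hKtop : K ≠ ⊤ := by
      rw [hK, Ne, LinearMap.ker_eq_top]
      exact Algebra.trace_ne_zero (ZMod 2) F
    have h1 := two_mul_card_le_of_ne_top S hS
    have h2 := two_mul_card_le_of_ne_top K hKtop
    have h3 : ((S : Set F)ᶜ).ncard < (K : Set F).ncard := by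
      rw [← Set.ncard_image_of_injective _ hinj]
      refine Set.ncard_lt_ncard ⟨?_, fun h => ?_⟩ (Set.toFinite _)
      · rintro _ ⟨w, hw, rfl⟩
        exact hoff w hw
      · obtain ⟨w, hw, hw0⟩ := h K.zero_mem
        have : w = 0 := by simpa using hw0
        exact hw (this ▸ S.zero_mem)
    have h4 := Set.ncard_add_ncard_compl (S : Set F)
    have h5 : (S : Set F).ncard = Nat.card S := rfl
    have h6 : (K : Set F).ncard = Nat.card K := rfl
    omega
  · obtain ⟨ω, hω⟩ : ∃ ω : F, ω ^ 2 + ω + 1 = 0 := by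
      simp only [Function.Injective, not_forall] at hinj
      obtain ⟨a, b, hab, hne⟩ := hinj
      have hb : b ≠ 0 := by
        rintro rfl
        exact hne (by simpa using hab)
      have h : (a - b) * (a ^ 2 + a * b + b ^ 2) = 0 := by linear_combination hab
      have h' := (mul_eq_zero.1 h).resolve_left (sub_ne_zero.2 hne)
      refine ⟨a / b, ?_⟩
      field_simp
      linear_combination h'
    have hω3 : ω ^ 3 = 1 := by linear_combination (ω - 1) * hω
    have hstab (x : F) (hx : x ∈ S) : ω * x ∈ S := by
      have hle : S ≤ S.comap (LinearMap.mulLeft (ZMod 2) ω) := by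
        rw [hSdef, Submodule.span_le]
        intro u hu
        apply Submodule.subset_span
        simpa [mul_pow, hω3] using hu
      exact hle hx
    -- Multiplication by `ω` also preserves the complement of `S`, because `ω⁻¹ = ω²`.
    have hstab' (w : F) (hw : w ∉ S) : ω * w ∉ S := fun h => hw <| by
      have := hstab _ (hstab _ h)
      rwa [show ω * (ω * (ω * w)) = w by linear_combination w * hω3] at this
    have hpolar (h w : F) (hh : h ∈ S) (hw : w ∉ S) : Algebra.trace (ZMod 2) F (h ^ 3) =
        Algebra.trace (ZMod 2) F (w ^ 2 * h + w * h ^ 2) := by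
      have h1 := hoff (w + h) fun hwh => hw ((S.add_mem_iff_left hh).1 hwh)
      have e : (w + h) ^ 3 = w ^ 3 + (h ^ 3 + (w ^ 2 * h + w * h ^ 2)) := by
        linear_combination (w ^ 2 * h + w * h ^ 2) * CharTwo.two_eq_zero (R := F)
      rw [e, map_add, map_add, hoff w hw, zero_add] at h1
      exact CharTwo.add_eq_zero.1 h1
    obtain ⟨w, hw⟩ : ∃ w, w ∉ S := by
      by_contra! h
      exact hS (Submodule.eq_top_iff'.2 h)
    obtain ⟨h, hQh⟩ := exists_trace_cube_ne_zero hF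
    have hh : h ∈ S := by
      by_contra hh
      exact hQh (hoff h hh)
    have hw' : w + ω * w ∉ S := by
      rw [show w + ω * w = ω * (ω * w) by
        linear_combination w * hω - (ω ^ 2 * w) * CharTwo.two_eq_zero (R := F)]
      exact hstab' _ (hstab' _ hw)
    have e : (w + ω * w) ^ 2 * h + (w + ω * w) * h ^ 2 =
        (w ^ 2 * h + w * h ^ 2) + ((ω * w) ^ 2 * h + (ω * w) * h ^ 2) := by
      linear_combination (ω * w ^ 2 * h) * CharTwo.two_eq_zero (R := F)
    have key := hpolar h _ hh hw'
    rw [e, map_add, ← hpolar h w hh hw, ← hpolar h _ hh (hstab' w hw)] at key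
    exact hQh (left_eq_add.1 key)
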